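/- arXiv:1907.08950 — 2 statements merged into one kernel-verified Lean document; each statement's English description precedes it below -/
import Mathlib

section
/- Let N ≥ 1 and let x : Fin N → ℝ be injective with (Polynomial.hermite N).eval (x_l) = 0 for every l, i.e. x_1,…,x_N are the N distinct real zeros of the N-th Hermite polynomial (so each zero is simple and the derivative of hermite N is nonzero there). Then for all natural numbers n ≠ m with n, m ≤ N−1: ∑_{l=1}^{N} (hermite n).eval(x_l) · (hermite m).eval(x_l) / ((Polynomial.derivative (hermite N)).eval(x_l))² = 0. -/
open Polynomial

/-!
Write `B n m = ∑ l, H n (x l) * H m (x l) / (H N)' (x l) ^ 2`; as `B` is symmetric, it suffices to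
show `B n m = 0` for `m < n < N`, by descending induction on `n`.

* For `n = N - 1`, the identity `(H N)' = N * H (N - 1)` turns `B (N - 1) m` into
  `(1 / N) * ∑ l, H m (x l) / (H N)' (x l)`. By Lagrange interpolation this sum is the
  coefficient of degree `N - 1` of `H m`, which is zero since `m < N - 1`
  (`sum_eval_div_derivative`).
* Multiplication by `X` is symmetric for `B`, so the three-term recurrence
  `X * H n = H (n + 1) + n * H (n - 1)` gives
  `B (n + 1) m + n * B (n - 1) m = B n (m + 1) + m * B n (m - 1)`. Together with `B N m = 0`, this
  determines row `n - 1` from the rows `n` and `n + 1`.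
-/

theorem derivative_hermite_succ (n : ℕ) :
    derivative (hermite (n + 1)) = ((n : ℤ[X]) + 1) * hermite n := by
  induction n with
  | zero => simp
  | succ n ih =>
    rw [hermite_succ (n + 1), derivative_sub, derivative_mul, ih, derivative_mul,
      hermite_succ n]
    simp
    ring

theorem X_mul_hermite_succ (n : ℕ) :
    X * hermite (n + 1) = hermite (n + 2) + ((n : ℤ[X]) + 1) * hermite n := by
  rw [hermite_succ (n + 1), derivative_hermite_succ]
  ring

/-- A special case of Lagrange interpolation: a monic `P` of degree `N` vanishing at `N` distinct
points is their nodal polynomial, so the sum is the coefficient of degree `N - 1` of `f`, which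
vanishes for `deg f < N - 1`. -/
theorem sum_eval_div_derivative {N : ℕ} {x : Fin N → ℝ} (hx : Function.Injective x)
    {P : ℝ[X]} (hP : P.Monic) (hdeg : P.degree = N) (hzero : ∀ l, P.eval (x l) = 0)
    {f : ℝ[X]} (hf : f.natDegree + 1 < N) :
    ∑ l, f.eval (x l) / (derivative P).eval (x l) = 0 := by
  have hPn : P = Lagrange.nodal Finset.univ x := by
    apply Polynomial.eq_of_degree_le_of_eval_index_eq (v := x) Finset.univ hx.injOn
    · simp [hdeg]
    · simp [hdeg]
    · rw [hP.leadingCoeff, Lagrange.nodal_monic.leadingCoeff]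
    · intro i _
      rw [hzero, Lagrange.eval_nodal_at_node (Finset.mem_univ i)]
  have hdf : f.degree < (Finset.univ : Finset (Fin N)).card := by
    rw [Finset.card_univ, Fintype.card_fin]
    exact degree_le_natDegree.trans_lt (by exact_mod_cast (by omega : f.natDegree < N))
  have h := Lagrange.coeff_eq_sum (s := Finset.univ) (v := x) hx.injOn hdf
  rw [coeff_eq_zero_of_natDegree_lt (by simp; omega)] at h
  rw [h]
  refine Finset.sum_congr rfl fun i hi => ?_
  rw [hPn, Lagrange.eval_nodal_derivative_eval_node_eq hi, Lagrange.eval_nodal]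

/-- The orthogonality relation for `m < n`, by descending induction on `n`. The trivial row
`n = N` is included so that the recurrence can be applied when its largest index is `N`. -/
theorem hermite_sum_eq_zero_of_lt
    (N : ℕ) (x : Fin N → ℝ) (hx : Function.Injective x)
    (hzero : ∀ l, ((hermite N).map (Int.castRingHom ℝ)).eval (x l) = 0)
    (n m : ℕ) (hmn : m < n) (hn : n ≤ N) :
    ∑ l, ((hermite n).map (Int.castRingHom ℝ)).eval (x l) *
        ((hermite m).map (Int.castRingHom ℝ)).eval (x l) /
        (((derivative (hermite N)).map (Int.castRingHom ℝ)).eval (x l)) ^ 2 = 0 := by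
  induction hk : N - n using Nat.strong_induction_on generalizing n m with
  | _ k ih =>
  subst hk
  obtain rfl | rfl | h2 : n = N ∨ N = n + 1 ∨ n + 2 ≤ N := by omega
  · simp [hzero]
  · have hP : ((hermite (n + 1)).map (Int.castRingHom ℝ)).Monic := (hermite_monic _).map _
    have hdeg : ((hermite (n + 1)).map (Int.castRingHom ℝ)).degree = ((n + 1 : ℕ) : WithBot ℕ) := by
      rw [(hermite_monic _).degree_map, degree_hermite]
    have hf : ((hermite m).map (Int.castRingHom ℝ)).natDegree + 1 < n + 1 := by
      rw [(hermite_monic _).natDegree_map, natDegree_hermite]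
      omega
    have h := sum_eval_div_derivative hx hP hdeg hzero hf
    rw [← mul_zero ((n + 1 : ℝ)⁻¹), ← h, Finset.mul_sum]
    refine Finset.sum_congr rfl fun l _ => ?_
    have hn1 : (n + 1 : ℝ) ≠ 0 := by positivity
    rw [derivative_map, derivative_hermite_succ]
    simp only [Polynomial.map_mul, Polynomial.map_add, Polynomial.map_natCast, Polynomial.map_one,
      eval_mul, eval_add, eval_natCast, eval_one]
    -- If `H n` vanished at `x l`, both sides would be zero by the convention `a / 0 = 0`.
    by_cases h0 : ((hermite n).map (Int.castRingHom ℝ)).eval (x l) = 0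
    · simp [h0]
    · field_simp
  · have hrec : ∀ (k : ℕ) (t : ℝ), t * ((hermite (k + 1)).map (Int.castRingHom ℝ)).eval t =
        ((hermite (k + 2)).map (Int.castRingHom ℝ)).eval t +
          (k + 1) * ((hermite k).map (Int.castRingHom ℝ)).eval t := by
      intro k t
      simpa using congrArg (fun p : ℤ[X] => (p.map (Int.castRingHom ℝ)).eval t)
        (X_mul_hermite_succ k)
    have e1 := ih (N - (n + 2)) (by omega) (n + 2) m (by omega) h2 rfl
    have e2 := ih (N - (n + 1)) (by omega) (n + 1) (m + 1) (by omega) (by omega) rfl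
    have hn1 : (n + 1 : ℝ) ≠ 0 := by positivity
    apply (mul_eq_zero.1 _).resolve_left hn1
    cases m with
    | zero =>
      have key : ∀ a b c : ℝ, b = 0 → c = 0 → (n + 1 : ℝ) * a + b - c = 0 →
          (n + 1 : ℝ) * a = 0 := by
        rintro a b c rfl rfl h
        simpa using h
      refine key _ _ _ e1 e2 ?_
      rw [Finset.mul_sum, ← Finset.sum_add_distrib, ← Finset.sum_sub_distrib]
      refine Finset.sum_eq_zero fun l _ => ?_
      have r := hrec n (x l)
      simp only [zero_add, hermite_one, hermite_zero, map_X, eval_X, map_one,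
        Polynomial.map_one, eval_one]
      linear_combination
        -(1 / (((derivative (hermite N)).map (Int.castRingHom ℝ)).eval (x l)) ^ 2) * r
    | succ m =>
      have e3 := ih (N - (n + 1)) (by omega) (n + 1) m (by omega) (by omega) rfl
      have key : ∀ a b c d : ℝ, b = 0 → c = 0 → d = 0 → (n + 1 : ℝ) * a + b - c - (m + 1) * d = 0 →
          (n + 1 : ℝ) * a = 0 := by
        rintro a b c d rfl rfl rfl h
        simpa using h
      refine key _ _ _ _ e1 e2 e3 ?_
      rw [Finset.mul_sum, Finset.mul_sum, ← Finset.sum_add_distrib, ← Finset.sum_sub_distrib,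
        ← Finset.sum_sub_distrib]
      refine Finset.sum_eq_zero fun l _ => ?_
      have r := hrec n (x l)
      have rm := hrec m (x l)
      linear_combination
        (1 / (((derivative (hermite N)).map (Int.castRingHom ℝ)).eval (x l)) ^ 2) *
          (((hermite (n + 1)).map (Int.castRingHom ℝ)).eval (x l) * rm -
            ((hermite (m + 1)).map (Int.castRingHom ℝ)).eval (x l) * r)

/-- **Discrete orthogonality relations for Hermite polynomials**: the sum of
`H n · H m` over the `N` distinct zeros of the `N`-th Hermite polynomial, weighted by
`1/(H N)′²` at each zero, vanishes for distinct degrees `n ≠ m` below `N`. -/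
theorem discrete_orthogonality_hermite
    (N : ℕ) (hN : 1 ≤ N)
    (x : Fin N → ℝ) (hx : Function.Injective x)
    (hzero : ∀ l, ((Polynomial.hermite N).map (Int.castRingHom ℝ)).eval (x l) = 0)
    (n m : ℕ) (hnm : n ≠ m) (hn : n ≤ N - 1) (hm : m ≤ N - 1) :
    ∑ l, ((Polynomial.hermite n).map (Int.castRingHom ℝ)).eval (x l) *
        ((Polynomial.hermite m).map (Int.castRingHom ℝ)).eval (x l) /
        (((Polynomial.derivative (Polynomial.hermite N)).map (Int.castRingHom ℝ)).eval (x l)) ^ 2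
      = 0 := by
  rcases lt_or_gt_of_ne hnm with h | h
  · rw [← hermite_sum_eq_zero_of_lt N x hx hzero m n h (by omega)]
    exact Finset.sum_congr rfl fun l _ => by rw [mul_comm (eval _ _)]
  · exact hermite_sum_eq_zero_of_lt N x hx hzero n m h (by omega)
end

section
/- Let H_n be the physicists' Hermite polynomials, let D = {d_1 < … < d_M} be a finite set of positive integers, and let N ∈ ℕ with N ∉ D. Set Ξ_D = W[H_{d_1},…,H_{d_M}], P_{D,n} = W[H_{d_1},…,H_{d_M},H_n] for n ∉ D, and Ñ = (∑_{j=1}^{M} d_j) − M(M+1)/2 + N. Assume P_{D,N} has degree Ñ and let η : Fin Ñ → ℂ be injective with P_{D,N}(η_l) = 0 and Ξ_D(η_l) ≠ 0 for every l (so η_1,…,η_Ñ are all the zeros of P_{D,N}, necessarily simple, and none is a zero of Ξ_D). Then for all n ≠ m with n, m ∈ {0,…,N−1} \ D: ∑_{l=1}^{Ñ} P_{D,n}(η_l) · P_{D,m}(η_l) / ((P_{D,N})′(η_l))² = 0, where ′ denotes the polynomial derivative and evaluation at η_l ∈ ℂ is via the canonical map ℝ[X] → ℂ[X]. -/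
/-!
The vectors `u_n = (P_{D,n}(η_l) / P_{D,N}′(η_l))_l`, for `n < N`, are eigenvectors of one
complex symmetric matrix with the distinct eigenvalues `2 (n - M)`, hence mutually orthogonal for
the bilinear form `∑ l, u l * w l`. The claim is this orthogonality.

The matrix comes from the differential equation satisfied by every `P = P_{D,n}` (`KA_bilinear`),
with `Ξ = Ξ_D`:
`Ξ P″ - 2 Ξ′ P′ + Ξ″ P - 2x (Ξ P′ - Ξ′ P) + 2 (n - M) Ξ P = 0`.
Since `deg P_{D,n} < Ñ` (`degree_KAHermite_lt`), Lagrange interpolation writes `P_{D,n}` as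
`∑ l, u_n l • P_{D,N} / (x - η_l)`. Evaluating the equation for `P_{D,n}` at `η_k`, and using the
equation for `P_{D,N}` there, yields the off-diagonal entries `2 / (η_k - η_l)²`
(`stieltjes_relation`), visibly symmetric; the diagonal entries are irrelevant.

The differential equation is obtained from determinants without any division, so no Wronskian has
to be known to be nonzero. Two ingredients suffice. Applying `∂² - 2x∂` to the columns or to the
rows of a Wronskian matrix of Hermite polynomials gives the same total (`sum_rowDet_add_two`),
which expresses the difference `a - b` of the two determinants making up the second derivative
`a + b` of the Wronskian through lower derivatives. A three-term Plücker relation (`pluecker`) then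
links these determinants for `Ξ_D` with those for `P_{D,n}`.
-/

open Polynomial

/-- The physicists' Hermite polynomials: `H_0 = 1`, `H_{n+1} = 2·X·H_n − H_n′`. -/
noncomputable def hermiteP : ℕ → Polynomial ℝ
  | 0 => 1
  | n + 1 => 2 * Polynomial.X * hermiteP n - Polynomial.derivative (hermiteP n)

/-- The Wronskian `W[f_1,…,f_m]`: determinant of the matrix whose `(i,j)` entry is the
`i`-th derivative of `f j` (indices starting from `0`). -/
noncomputable def wronskian {m : ℕ} (f : Fin m → Polynomial ℝ) : Polynomial ℝ :=
  (Matrix.of fun i j : Fin m => Polynomial.derivative^[(i : ℕ)] (f j)).det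

/-- The Krein–Adler polynomial `P_{D,n} = W[H_{d_1},…,H_{d_M},H_n]` based on the
physicists' Hermite polynomials. -/
noncomputable def KAHermite {M : ℕ} (d : Fin M → ℕ) (n : ℕ) : Polynomial ℝ :=
  wronskian (Fin.snoc (fun j => hermiteP (d j)) (hermiteP n))

/-- The denominator polynomial `Ξ_D = W[H_{d_1},…,H_{d_M}]`. -/
noncomputable def XiHermite {M : ℕ} (d : Fin M → ℕ) : Polynomial ℝ :=
  wronskian (fun j => hermiteP (d j))

/-! ### Determinants of derivatives with prescribed orders -/

/-- The generalized Wronskian with derivative orders `r`: the determinant whose `(i, j)` entry is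
the `r i`-th derivative of `f j`. The orders `0, 1, …, m - 1` give the Wronskian itself. -/
noncomputable def rowDet {m : ℕ} (f : Fin m → ℝ[X]) (r : Fin m → ℕ) : ℝ[X] :=
  (Matrix.of fun i j : Fin m => derivative^[r i] (f j)).det

theorem wronskian_eq_rowDet {m : ℕ} (f : Fin m → ℝ[X]) :
    _root_.wronskian f = rowDet f (fun i => (i : ℕ)) := rfl

theorem rowDet_update {m : ℕ} (f : Fin m → ℝ[X]) (r : Fin m → ℕ) (i : Fin m) (k : ℕ) :
    rowDet f (Function.update r i k) =
      ((Matrix.of fun i j : Fin m => derivative^[r i] (f j)).updateRow i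
        (fun j => derivative^[k] (f j))).det := by
  unfold rowDet
  congr 1
  ext a b : 2
  by_cases h : a = i
  · subst h; simp
  · simp [h, Matrix.updateRow_ne]

theorem rowDet_eq_zero {m : ℕ} (f : Fin m → ℝ[X]) (r : Fin m → ℕ) {a b : Fin m}
    (hab : a ≠ b) (h : r a = r b) : rowDet f r = 0 :=
  Matrix.det_zero_of_row_eq hab (by ext1 j; simp [h])

theorem rowDet_swap {m : ℕ} (f : Fin m → ℝ[X]) (r : Fin m → ℕ) {a b : Fin m}
    (hab : a ≠ b) : rowDet f (r ∘ Equiv.swap a b) = -rowDet f r := by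
  have := Matrix.det_permute (Equiv.swap a b) (Matrix.of fun i j : Fin m => derivative^[r i] (f j))
  rw [Equiv.Perm.sign_swap hab] at this
  simp only [Units.val_neg, Units.val_one, Int.cast_neg, Int.cast_one, neg_mul, one_mul] at this
  exact this

/-- Both sides equal the trace of `adjugate A * B`. -/
theorem sum_det_updateRow_eq_sum_det_updateCol {m : ℕ} {R : Type*} [CommRing R]
    (A B : Matrix (Fin m) (Fin m) R) :
    ∑ i, (A.updateRow i (B i)).det = ∑ j, (A.updateCol j (fun i => B i j)).det := by
  simp_rw [← Matrix.cramer_transpose_apply, ← Matrix.cramer_apply,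
    Matrix.cramer_eq_adjugate_mulVec, Matrix.mulVec, dotProduct, ← Matrix.adjugate_transpose,
    Matrix.transpose_apply]
  rw [Finset.sum_comm]

/-- Jacobi's formula, in its row form. -/
theorem derivative_det {m : ℕ} (A : Matrix (Fin m) (Fin m) ℝ[X]) :
    derivative A.det = ∑ i, (A.updateRow i (fun j => derivative (A i j))).det := by
  rw [sum_det_updateRow_eq_sum_det_updateCol A (fun i j => derivative (A i j))]
  simp_rw [Matrix.det_apply]
  rw [derivative_sum, Finset.sum_comm]
  refine Finset.sum_congr rfl fun σ _ => ?_
  rw [← Finset.smul_sum]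
  have : ∀ (u : ℤˣ) (p : ℝ[X]), derivative (u • p) = u • derivative p := by
    intro u p
    rcases Int.units_eq_one_or u with rfl | rfl <;> simp
  rw [this, derivative_prod_finset]
  congr 1
  refine Finset.sum_congr rfl fun j _ => ?_
  rw [← Finset.prod_erase_mul _ _ (Finset.mem_univ j)]
  congr 1
  · refine Finset.prod_congr rfl fun b hb => ?_
    rw [Matrix.updateCol_ne (Finset.ne_of_mem_erase hb)]
  · simp

theorem derivative_rowDet {m : ℕ} (f : Fin m → ℝ[X]) (r : Fin m → ℕ) :
    derivative (rowDet f r) = ∑ i, rowDet f (Function.update r i (r i + 1)) := by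
  simp_rw [rowDet_update]
  rw [rowDet, derivative_det]
  simp only [Matrix.of_apply, Function.iterate_succ_apply']

/-- Let the `f j` be eigenfunctions of `L = ∂² - 2x∂`. Replacing one column of the Wronskian matrix
at a time by its image under `L` and summing gives `-(∑ c j) W`; replacing rows instead of columns
gives the same sum, and `(L f)⁽ⁱ⁾ = f⁽ⁱ⁺²⁾ - 2x f⁽ⁱ⁺¹⁾ - 2i f⁽ⁱ⁾` turns it into the
determinants below. -/
theorem sum_rowDet_add_two {m : ℕ} (f : Fin m → ℝ[X]) (c : Fin m → ℝ)
    (hf : ∀ j, derivative (derivative (f j)) - 2 * X * derivative (f j) = -C (c j) * f j) :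
    ∑ i : Fin m, rowDet f (Function.update (fun i => (i : ℕ)) i (i + 2)) =
      2 * X * derivative (_root_.wronskian f)
        + (C ((m : ℝ) * (m - 1)) - C (∑ j, c j)) * _root_.wronskian f := by
  set A : Matrix (Fin m) (Fin m) ℝ[X] := Matrix.of fun i j : Fin m => derivative^[(i : ℕ)] (f j)
    with hA
  have hW : _root_.wronskian f = A.det := rfl
  have key := sum_det_updateRow_eq_sum_det_updateCol A (fun i j => -C (c j) * A i j)
  have hcol : ∀ j, (A.updateCol j (fun i => -C (c j) * A i j)).det = -C (c j) * A.det := by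
    intro j
    have := Matrix.det_updateCol_smul A j (-C (c j)) (fun i => A i j)
    have h2 : A.updateCol j (fun i => A i j) = A := Matrix.updateCol_eq_self A j
    rw [h2] at this
    exact this
  have hrow : ∀ i : Fin m, (A.updateRow i (fun j => -C (c j) * A i j)).det =
      rowDet f (Function.update (fun i => (i : ℕ)) i (i + 2))
      - 2 * X * rowDet f (Function.update (fun i => (i : ℕ)) i (i + 1))
      - C (2 * (i : ℝ)) * A.det := by
    intro i
    have e : (fun j => -C (c j) * A i j) = (fun j => derivative^[(i : ℕ) + 2] (f j)) +
        ((-(2 * X) : ℝ[X]) • (fun j => derivative^[(i : ℕ) + 1] (f j))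
          + (-C (2 * (i : ℝ)) : ℝ[X]) • A i) := by
      ext1 j
      have h := congrArg (derivative^[(i : ℕ)]) (hf j)
      have e1 : 2 * X * derivative (f j) = C 2 * (derivative (f j) * X) := by
        rw [C_ofNat]; ring
      rw [iterate_derivative_sub, e1, iterate_derivative_C_mul,
        iterate_derivative_derivative_mul_X, ← C_neg, iterate_derivative_C_mul,
        ← Function.iterate_succ_apply, ← Function.iterate_succ_apply] at h
      simp only [hA, Matrix.of_apply, Pi.add_apply, Pi.smul_apply, smul_eq_mul]
      rw [← C_neg, ← h]
      simp only [nsmul_eq_mul, C_mul, C_ofNat, map_natCast]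
      ring
    rw [e, Matrix.det_updateRow_add, Matrix.det_updateRow_add, Matrix.det_updateRow_smul,
      Matrix.det_updateRow_smul, Matrix.updateRow_eq_self, rowDet_update, rowDet_update]
    simp only [hA]
    ring
  rw [Finset.sum_congr rfl fun i _ => hrow i, Finset.sum_congr rfl fun j _ => hcol j,
    Finset.sum_sub_distrib, Finset.sum_sub_distrib, ← Finset.mul_sum, ← Finset.sum_mul,
    ← Finset.sum_mul, ← derivative_rowDet, ← wronskian_eq_rowDet] at key
  have hs : ∑ i : Fin m, C (2 * (i : ℝ)) = (C ((m : ℝ) * (m - 1)) : ℝ[X]) := by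
    rw [← map_sum]
    congr 1
    rw [Fin.sum_univ_eq_sum_range (fun i => 2 * (i : ℝ)) m]
    clear * -
    induction m with
    | zero => simp
    | succ k ih => rw [Finset.sum_range_succ, ih]; push_cast; ring
  rw [hs, Finset.sum_neg_distrib] at key
  rw [map_sum, hW]
  rw [hW] at key
  linear_combination key

/-! ### Second derivatives of a Wronskian -/

/-- Only raising the top order survives; every other term has two equal rows. -/
theorem derivative_wronskian_succ {k : ℕ} (f : Fin (k + 1) → ℝ[X]) :
    derivative (_root_.wronskian f) =
      rowDet f (Function.update (fun i => (i : ℕ)) (Fin.last k) (k + 1)) := by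
  rw [wronskian_eq_rowDet, derivative_rowDet, Fin.sum_univ_castSucc]
  rw [Finset.sum_eq_zero, zero_add]
  · simp
  · intro i _
    refine rowDet_eq_zero f _ (a := i.castSucc) (b := i.succ) (by simp [Fin.ext_iff]) ?_
    rw [Function.update_self, Function.update_of_ne (by simp [Fin.ext_iff])]
    simp

/-- Both sides have at most one nonzero term, coming from the next-to-last row: the row orders
`…, k + 1, k` and `…, k, k + 1` differ by a transposition. -/
theorem sum_castSucc_add_two {k : ℕ} (f : Fin (k + 1) → ℝ[X]) :
    ∑ i : Fin k, rowDet f (Function.update (fun i => (i : ℕ)) i.castSucc (i + 2)) =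
    -∑ i : Fin k, rowDet f (Function.update
      (Function.update (fun i => (i : ℕ)) (Fin.last k) (k + 1)) i.castSucc (i + 1)) := by
  rw [← Finset.sum_neg_distrib]
  refine Finset.sum_congr rfl fun i _ => ?_
  by_cases h : (i : ℕ) + 1 = k
  · rw [← rowDet_swap f _ (a := i.castSucc) (b := Fin.last k) (by simp [Fin.ext_iff]; omega)]
    congr 1
    ext a
    by_cases ha : a = i.castSucc
    · subst ha
      have : Fin.last k ≠ i.castSucc := by simp [Fin.ext_iff]; omega
      simp [Function.update_of_ne this]; omega
    by_cases hb : a = Fin.last k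
    · subst hb
      simp [Function.update_of_ne ha, h]
    · simp [Equiv.swap_apply_of_ne_of_ne ha hb, Function.update_of_ne ha,
        Function.update_of_ne hb]
  · have hi := i.isLt
    rw [rowDet_eq_zero f _ (a := i.castSucc) (b := ⟨i + 2, by omega⟩),
      rowDet_eq_zero f _ (a := i.castSucc) (b := ⟨i + 1, by omega⟩), neg_zero]
    · simp [Fin.ext_iff]
    · rw [Function.update_self, Function.update_of_ne (by simp [Fin.ext_iff]),
        Function.update_of_ne (by simp [Fin.ext_iff]; omega)]
    · simp [Fin.ext_iff]
    · rw [Function.update_self, Function.update_of_ne (by simp [Fin.ext_iff])]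

/-- `W″ = a + b`, where `a` raises the top order twice and `b` raises the two top orders
once each. Here `b` is written as a sum over `Fin k`, so that it is `0` for `k = 0`. -/
theorem derivative2_wronskian_succ {k : ℕ} (f : Fin (k + 1) → ℝ[X]) :
    derivative (derivative (_root_.wronskian f)) =
      rowDet f (Function.update (fun i => (i : ℕ)) (Fin.last k) (k + 2)) +
      ∑ i : Fin k, rowDet f (Function.update
      (Function.update (fun i => (i : ℕ)) (Fin.last k) (k + 1)) i.castSucc (i + 1)) := by
  rw [derivative_wronskian_succ, derivative_rowDet, Fin.sum_univ_castSucc, add_comm]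
  congr 1
  · simp
  · refine Finset.sum_congr rfl fun i _ => ?_
    rw [Function.update_of_ne (a := i.castSucc) (by simp [Fin.ext_iff]; omega)]
    simp

/-- The sum of `sum_rowDet_add_two` equals `a - b`, with `a` and `b` as in
`derivative2_wronskian_succ`. -/
theorem sum_add_two_eq {k : ℕ} (f : Fin (k + 1) → ℝ[X]) :
    ∑ i : Fin (k + 1), rowDet f (Function.update (fun i => (i : ℕ)) i (i + 2)) =
      rowDet f (Function.update (fun i => (i : ℕ)) (Fin.last k) (k + 2)) -
      ∑ i : Fin k, rowDet f (Function.update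
      (Function.update (fun i => (i : ℕ)) (Fin.last k) (k + 1)) i.castSucc (i + 1)) := by
  rw [Fin.sum_univ_castSucc]
  simp only [Fin.val_castSucc, Fin.val_last]
  rw [sum_castSucc_add_two]
  ring

/-- With at least two functions, `b` of `derivative2_wronskian_succ` is the determinant
with the orders `0, …, k - 1, k + 1, k + 2`. -/
theorem sum_b_eq {k : ℕ} (f : Fin (k + 2) → ℝ[X]) :
    ∑ i : Fin (k + 1), rowDet f (Function.update
      (Function.update (fun i => (i : ℕ)) (Fin.last (k + 1)) (k + 2)) i.castSucc (i + 1)) =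
    rowDet f (fun i => ((⟨k, by omega⟩ : Fin (k + 3)).succAbove i : ℕ)) := by
  rw [Fin.sum_univ_castSucc, Finset.sum_eq_zero, zero_add]
  · congr 1
    ext a
    simp only [Function.update_apply, Fin.succAbove, Fin.ext_iff, Fin.lt_def]
    have := a.isLt
    split_ifs <;> simp_all <;> omega
  · intro i _
    have hi := i.isLt
    refine rowDet_eq_zero f _ (a := i.castSucc.castSucc) (b := ⟨i + 1, by omega⟩)
      (by simp [Fin.ext_iff]) ?_
    rw [Function.update_self, Function.update_of_ne (by simp [Fin.ext_iff]),
      Function.update_of_ne (by simp [Fin.ext_iff]; omega)]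
    simp

/-! ### The bilinear differential equation -/

/-- Three-term Plücker relation between the Wronskians of `f` and of `f` extended by `g`. With
`t i` the determinant of `f` with orders `0, …, k - 1, i`, the column `(t i)` is a combination of
the columns `(f j)⁽ⁱ⁾`, so the square matrix with columns `(f j)⁽ⁱ⁾`, `g⁽ⁱ⁾`, `t i`
for `i ≤ k + 2` is singular. Expanding its determinant along the column `t`, which vanishes for
`i < k`, leaves three terms. -/
theorem pluecker {k : ℕ} (f : Fin (k + 1) → ℝ[X]) (g : ℝ[X]) :
    _root_.wronskian f * rowDet (Fin.snoc f g : Fin (k + 2) → ℝ[X])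
        (fun i => ((⟨k, by omega⟩ : Fin (k + 3)).succAbove i : ℕ))
      - derivative (_root_.wronskian f) * derivative (_root_.wronskian (Fin.snoc f g : Fin (k + 2) → ℝ[X]))
      + rowDet f (Function.update (fun i => (i : ℕ)) (Fin.last k) (k + 2)) *
        _root_.wronskian (Fin.snoc f g : Fin (k + 2) → ℝ[X]) = 0 := by
  set F : Fin (k + 2) → ℝ[X] := Fin.snoc f g with hF
  set t : ℕ → ℝ[X] := fun i => rowDet f (Function.update (fun i => (i : ℕ)) (Fin.last k) i) with ht
  set A : Matrix (Fin (k + 1)) (Fin (k + 1)) ℝ[X] :=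
    Matrix.of fun i j => derivative^[(i : ℕ)] (f j) with hA
  have htc : ∀ i, t i = ∑ j, A.adjugate j (Fin.last k) * derivative^[i] (f j) := by
    intro i
    simp only [ht]
    rw [rowDet_update, ← Matrix.cramer_transpose_apply, Matrix.cramer_eq_adjugate_mulVec,
      ← Matrix.adjugate_transpose]
    rfl
  set Q : Matrix (Fin (k + 3)) (Fin (k + 3)) ℝ[X] := Matrix.of fun i j =>
    (Fin.snoc (fun j => derivative^[(i : ℕ)] (F j)) (t i) : Fin (k + 3) → ℝ[X]) j with hQ
  have hdet : Q.det = 0 := by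
    rw [← Matrix.exists_mulVec_eq_zero_iff]
    refine ⟨Fin.snoc (Fin.snoc (fun j => A.adjugate j (Fin.last k)) 0 : Fin (k + 2) → ℝ[X]) (-1),
      fun h => ?_, ?_⟩
    · have := congrFun h (Fin.last _)
      simp at this
    · ext1 i
      simp only [Matrix.mulVec, dotProduct, hQ, Matrix.of_apply, Pi.zero_apply]
      rw [Fin.sum_univ_castSucc, Fin.sum_univ_castSucc]
      simp only [Fin.snoc_castSucc, Fin.snoc_last, hF, htc]
      simp [mul_comm]
  rw [Matrix.det_succ_column Q (Fin.last _), Fin.sum_univ_castSucc, Fin.sum_univ_castSucc,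
    Fin.sum_univ_castSucc, Finset.sum_eq_zero, zero_add] at hdet
  · have hsub : ∀ i : Fin (k + 3), (Q.submatrix i.succAbove (Fin.last (k + 2)).succAbove).det =
        rowDet F (fun a => (i.succAbove a : ℕ)) := by
      intro i
      unfold rowDet
      congr 1
      ext a b : 2
      simp [hQ]
    have t0 : t k = _root_.wronskian f := by
      simp only [ht]
      rw [wronskian_eq_rowDet]
      congr 1
      exact Function.update_eq_self_iff.2 rfl
    have t1 : t (k + 1) = derivative (_root_.wronskian f) := (derivative_wronskian_succ f).symm
    have r1 : rowDet F (fun a => ((Fin.last (k + 1)).castSucc.succAbove a : ℕ)) =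
        derivative (_root_.wronskian F) := by
      rw [derivative_wronskian_succ]
      congr 1
      ext a
      have := a.isLt
      simp only [Function.update_apply, Fin.succAbove, Fin.ext_iff, Fin.lt_def]
      split_ifs <;> simp_all <;> omega
    have r2 : rowDet F (fun a => ((Fin.last (k + 2)).succAbove a : ℕ)) = _root_.wronskian F := by
      simp [wronskian_eq_rowDet]
    have r0 : (Fin.last k).castSucc.castSucc = (⟨k, by omega⟩ : Fin (k + 3)) := rfl
    rw [hsub, hsub, hsub, r1, r2, r0] at hdet
    have q : ∀ i, Q i (Fin.last _) = t i := by intro i; simp [hQ]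
    simp only [q] at hdet
    simp only [Fin.val_castSucc, Fin.val_last, t1] at hdet
    rw [t0] at hdet
    have p0 : (-1 : ℝ[X]) ^ (k + (k + 2)) = 1 := Even.neg_one_pow ⟨k + 1, by ring⟩
    have p1 : (-1 : ℝ[X]) ^ (k + 1 + (k + 2)) = -1 := Odd.neg_one_pow ⟨k + 1, by ring⟩
    have p2 : (-1 : ℝ[X]) ^ (k + 2 + (k + 2)) = 1 := Even.neg_one_pow ⟨k + 2, by ring⟩
    rw [p0, p1, p2] at hdet
    linear_combination hdet
  · intro i _
    have q : Q i.castSucc.castSucc.castSucc (Fin.last _) = 0 := by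
      simp only [hQ, Matrix.of_apply, Fin.snoc_last, ht]
      refine rowDet_eq_zero f _ (a := i.castSucc) (b := Fin.last k)
        (by simp [Fin.ext_iff]; omega) ?_
      rw [Function.update_self, Function.update_of_ne (by simp [Fin.ext_iff]; omega)]
      simp
    rw [q]; ring

theorem hermiteP_derivative (n : ℕ) :
    derivative (hermiteP (n + 1)) = C (2 * ((n : ℝ) + 1)) * hermiteP n := by
  induction n with
  | zero => simp [hermiteP, C_ofNat]
  | succ n ih =>
    rw [hermiteP, derivative_sub, ih, derivative_mul, ih]
    simp [hermiteP, derivative_mul, C_ofNat]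
    ring

theorem hermiteP_ode (n : ℕ) :
    derivative (derivative (hermiteP n)) - 2 * X * derivative (hermiteP n) =
      -C (2 * (n : ℝ)) * hermiteP n := by
  cases n with
  | zero => simp [hermiteP]
  | succ n =>
    rw [hermiteP_derivative, derivative_C_mul]
    simp only [hermiteP]
    push_cast
    ring

/-- Writing `Ξ″ = a + b` and `P″ = c + e` as in `derivative2_wronskian_succ`, the Plücker relation
`Ξ e + a P = Ξ′ P′` gives `Ξ P″ - 2 Ξ′ P′ + Ξ″ P = Ξ (c - e) - (a - b) P`, and both differences
are known from `sum_rowDet_add_two`. -/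
theorem KA_bilinear {M : ℕ} (d : Fin M → ℕ) (n : ℕ) :
    XiHermite d * derivative (derivative (KAHermite d n))
      - 2 * derivative (XiHermite d) * derivative (KAHermite d n)
      + derivative (derivative (XiHermite d)) * KAHermite d n
      - 2 * X * (XiHermite d * derivative (KAHermite d n)
          - derivative (XiHermite d) * KAHermite d n)
      + C (2 * ((n : ℝ) - M)) * (XiHermite d * KAHermite d n) = 0 := by
  cases M with
  | zero =>
    have h1 : XiHermite d = 1 := by simp [XiHermite, _root_.wronskian]
    have h2 : KAHermite d n = hermiteP n := by
      simp [KAHermite, _root_.wronskian, Fin.snoc]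
    rw [h1, h2]
    have := hermiteP_ode n
    simp
    simp at this
    linear_combination this
  | succ k =>
    have o1 := sum_rowDet_add_two (fun j => hermiteP (d j)) (fun j => 2 * (d j : ℝ))
      (fun j => hermiteP_ode _)
    have o2 := sum_rowDet_add_two (Fin.snoc (fun j => hermiteP (d j)) (hermiteP n))
      (Fin.snoc (fun j => 2 * (d j : ℝ)) (2 * (n : ℝ)) : Fin (k + 2) → ℝ) (by
        intro j
        refine Fin.lastCases ?_ (fun j => ?_) j
        · simpa using hermiteP_ode n
        · simpa using hermiteP_ode (d j))
    have d1 := derivative2_wronskian_succ (fun j => hermiteP (d j))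
    have d2 := derivative2_wronskian_succ (Fin.snoc (fun j => hermiteP (d j)) (hermiteP n))
    have pl := pluecker (fun j => hermiteP (d j)) (hermiteP n)
    rw [sum_add_two_eq] at o1 o2
    rw [sum_b_eq] at o2 d2
    rw [Fin.sum_univ_castSucc] at o2
    simp only [Fin.snoc_castSucc, Fin.snoc_last] at o2
    change _ = 2 * X * derivative (XiHermite d) + _ * XiHermite d at o1
    change _ = 2 * X * derivative (KAHermite d n) + _ * KAHermite d n at o2
    change derivative (derivative (XiHermite d)) = _ at d1
    change derivative (derivative (KAHermite d n)) = _ at d2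
    change XiHermite d * _ - derivative (XiHermite d) * derivative (KAHermite d n)
      + _ * KAHermite d n = 0 at pl
    simp only [C_add, C_sub, C_mul, Nat.cast_succ] at o1 o2 ⊢
    simp only [C_1, C_ofNat] at o1 o2 ⊢
    rw [d1, d2]
    linear_combination XiHermite d * o2 - KAHermite d n * o1 + 2 * pl

/-! ### Degrees -/

/-- Stated in `WithBot ℕ`, so that it also holds when the iterated derivative vanishes. -/
theorem degree_iterate_derivative_add_le (f : ℝ[X]) (i : ℕ) :
    (derivative^[i] f).degree + (i : WithBot ℕ) ≤ f.degree := by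
  induction i with
  | zero => simp
  | succ i ih =>
    refine le_trans ?_ ih
    rw [Function.iterate_succ_apply']
    set g := derivative^[i] f
    by_cases hg : g.natDegree = 0
    · rw [derivative_of_natDegree_zero hg]; simp
    · have := degree_derivative_lt (p := g) (by rintro h; simp [h] at hg)
      by_cases h0 : derivative g = 0
      · simp [h0]
      · have hg0 : g ≠ 0 := by rintro h; simp [h] at hg
        rw [degree_eq_natDegree h0, degree_eq_natDegree hg0] at this ⊢
        norm_cast at this ⊢
        omega

theorem degree_wronskian_add_le {m : ℕ} (f : Fin m → ℝ[X]) :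
    (_root_.wronskian f).degree + ((m * (m - 1) / 2 : ℕ) : WithBot ℕ) ≤ ∑ j, (f j).degree := by
  have key : ∀ σ : Equiv.Perm (Fin m), (∏ j, derivative^[(σ j : ℕ)] (f j)).degree
      + ((m * (m - 1) / 2 : ℕ) : WithBot ℕ) ≤ ∑ j, (f j).degree := by
    intro σ
    have hs : m * (m - 1) / 2 = ∑ j, (σ j : ℕ) := by
      rw [Equiv.sum_comp σ (fun i : Fin m => (i : ℕ)), Fin.sum_univ_eq_sum_range (fun i => i),
        Finset.sum_range_id]
    rw [hs, degree_prod, Nat.cast_sum, ← Finset.sum_add_distrib]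
    exact Finset.sum_le_sum fun j _ => degree_iterate_derivative_add_le _ _
  by_cases h0 : _root_.wronskian f = 0
  · simp [h0]
  have hW : _root_.wronskian f = ∑ σ : Equiv.Perm (Fin m),
      Equiv.Perm.sign σ • ∏ j, derivative^[(σ j : ℕ)] (f j) := by
    simp [_root_.wronskian, Matrix.det_apply]
  have hle := degree_sum_le (Finset.univ : Finset (Equiv.Perm (Fin m)))
    (fun σ => Equiv.Perm.sign σ • ∏ j, derivative^[(σ j : ℕ)] (f j))
  rw [← hW] at hle
  obtain ⟨σ, -, hσ⟩ := Finset.exists_mem_eq_sup Finset.univ Finset.univ_nonempty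
    (fun σ : Equiv.Perm (Fin m) =>
      (Equiv.Perm.sign σ • ∏ j, derivative^[(σ j : ℕ)] (f j)).degree)
  rw [hσ] at hle
  exact (add_le_add_left (hle.trans (degree_smul_le _ _)) _).trans (key σ)

theorem degree_hermiteP_le (n : ℕ) : (hermiteP n).degree ≤ n := by
  induction n with
  | zero => simp [hermiteP]
  | succ n ih =>
    rw [hermiteP]
    refine (degree_sub_le _ _).trans (max_le ?_ ?_)
    · rw [mul_assoc, ← C_ofNat, ← smul_eq_C_mul]
      refine (degree_smul_le _ _).trans ?_
      rw [degree_mul, degree_X, add_comm]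
      push_cast
      gcongr
    · refine degree_derivative_le.trans (ih.trans ?_)
      norm_cast
      omega

theorem degree_KAHermite_lt {M N Nt : ℕ} (d : Fin M → ℕ)
    (hNt : Nt + M * (M + 1) / 2 = (∑ j, d j) + N) {n : ℕ} (hn : n < N) :
    (KAHermite d n).degree < Nt := by
  have h := degree_wronskian_add_le
    (Fin.snoc (fun j => hermiteP (d j)) (hermiteP n) : Fin (M + 1) → ℝ[X])
  rw [Fin.sum_univ_castSucc] at h
  simp only [Fin.snoc_castSucc, Fin.snoc_last, Nat.add_sub_cancel] at h
  have h2 := h.trans (add_le_add (Finset.sum_le_sum fun j _ => degree_hermiteP_le (d j))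
    (degree_hermiteP_le n))
  change (KAHermite d n).degree + _ ≤ _ at h2
  by_cases h0 : KAHermite d n = 0
  · rw [h0, degree_zero]; exact WithBot.bot_lt_coe _
  · rw [degree_eq_natDegree h0] at h2 ⊢
    norm_cast at h2 ⊢
    rw [mul_comm (M + 1) M] at h2
    omega

/-! ### The symmetric eigenvalue problem at the zeros -/

/-- Let `P` have the simple zeros `η` and solve `T P = -cP Ξ P`, where
`T = Ξ ∂² - 2 (x Ξ + Ξ′) ∂ + V`. Any solution `f` of `T f = -c Ξ f` of smaller degree is
`∑ l, u l • P / (x - η l)` with `u l = f (η l) / P′ (η l)`, and evaluating its equation at the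
zeros says that `u` is an eigenvector, with eigenvalue `c`, of a matrix which has off-diagonal
entries `2 / (η k - η l)²` and whose diagonal `τ` does not depend on `f`. -/
theorem stieltjes_relation {Nt : ℕ} {P Ξ V : ℂ[X]} {cP : ℂ} {η : Fin Nt → ℂ}
    (hη : Function.Injective η) (hdeg : P.natDegree = Nt) (hzero : ∀ l, P.eval (η l) = 0)
    (hΞ : ∀ l, Ξ.eval (η l) ≠ 0)
    (hP : Ξ * derivative (derivative P) - 2 * (X * Ξ + derivative Ξ) * derivative P
      + V * P + C cP * (Ξ * P) = 0) :
    ∃ τ : Fin Nt → ℂ, ∀ (f : ℂ[X]) (c : ℂ), f.degree < Nt →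
      Ξ * derivative (derivative f) - 2 * (X * Ξ + derivative Ξ) * derivative f
        + V * f + C c * (Ξ * f) = 0 →
      ∀ k, c * (f.eval (η k) / (derivative P).eval (η k)) =
        τ k * (f.eval (η k) / (derivative P).eval (η k)) +
        ∑ l ∈ Finset.univ.erase k,
          2 / (η k - η l) ^ 2 * (f.eval (η l) / (derivative P).eval (η l)) := by
  rcases Nat.eq_zero_or_pos Nt with h0 | hpos
  · subst h0
    exact ⟨fun _ => 0, fun _ _ _ _ k => k.elim0⟩
  have hP0 : P ≠ 0 := by rintro rfl; simp at hdeg; omega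
  have hG : ∀ l, ∃ G : ℂ[X], (X - C (η l)) * G = P ∧ G.degree < Nt := by
    intro l
    refine ⟨P /ₘ (X - C (η l)), mul_divByMonic_eq_iff_isRoot.2 (hzero l), ?_⟩
    rw [← hdeg, ← degree_eq_natDegree hP0]
    exact degree_divByMonic_lt _ _ hP0 (by simp)
  choose G hGP hGdeg using hG
  have hGself : ∀ l, (G l).eval (η l) = (derivative P).eval (η l) := by
    intro l
    rw [← hGP l]; simp [derivative_mul]
  have hsub : ∀ k l, k ≠ l → η k - η l ≠ 0 := fun k l h => sub_ne_zero.2 (hη.ne h)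
  have hGne : ∀ k l, k ≠ l → (G l).eval (η k) = 0 := by
    intro k l h
    have := hzero k
    rw [← hGP l] at this
    simpa [hsub k l h] using this
  have hP' : ∀ l, (derivative P).eval (η l) ≠ 0 := by
    intro l hl
    have : G l = 0 := by
      refine eq_zero_of_degree_lt_of_eval_index_eq_zero (s := Finset.univ) (v := η)
        hη.injOn (by simpa using hGdeg l) fun k _ => ?_
      by_cases h : k = l
      · rw [h, hGself, hl]
      · exact hGne k l h
    exact hP0 (by rw [← hGP l, this, mul_zero])
  -- At a zero of `P` the equation for `P` reads `Ξ P″ = 2 (x Ξ + Ξ′) P′`, so in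
  -- `T (P / (x - η l))` at `η k` only the term with `(η k - η l)⁻²` survives.
  have hTG : ∀ k l, k ≠ l →
      (Ξ * derivative (derivative (G l)) - 2 * (X * Ξ + derivative Ξ) * derivative (G l)
        + V * G l).eval (η k) =
      -(2 / (η k - η l) ^ 2 * (Ξ.eval (η k) * (derivative P).eval (η k))) := by
    intro k l h
    have e0 := hGne k l h
    have s := hsub k l h
    have e1 : (η k - η l) * (derivative (G l)).eval (η k) = (derivative P).eval (η k) := by
      rw [← hGP l]; simp [derivative_mul, e0]
    have e2 : 2 * (derivative (G l)).eval (η k)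
        + (η k - η l) * (derivative (derivative (G l))).eval (η k)
        = (derivative (derivative P)).eval (η k) := by
      rw [← hGP l]; simp [derivative_mul]; ring
    have e3 := congrArg (eval (η k)) hP
    simp only [eval_add, eval_sub, eval_mul, eval_X, eval_C, eval_ofNat, hzero, eval_zero,
      mul_zero, add_zero] at e3
    simp only [eval_add, eval_sub, eval_mul, eval_X, eval_ofNat, e0, mul_zero, add_zero]
    rw [← e1, ← e2] at e3
    rw [← e1]
    field_simp
    linear_combination e3
  refine ⟨fun k => -((Ξ * derivative (derivative (G k))
      - 2 * (X * Ξ + derivative Ξ) * derivative (G k) + V * G k).eval (η k)) /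
      (Ξ.eval (η k) * (derivative P).eval (η k)), ?_⟩
  intro f c hf hode k
  set u : Fin Nt → ℂ := fun l => f.eval (η l) / (derivative P).eval (η l) with hu
  have hexp : f = ∑ l, C (u l) * G l := by
    refine eq_of_degrees_lt_of_eval_index_eq (s := Finset.univ) (v := η) hη.injOn
      (by simpa using hf) ?_ fun k _ => ?_
    · rw [Finset.card_univ, Fintype.card_fin]
      refine (degree_sum_le _ _).trans_lt ((Finset.sup_lt_iff (WithBot.bot_lt_coe _)).2
        fun l _ => ?_)
      rw [← smul_eq_C_mul]
      exact (degree_smul_le _ _).trans_lt (hGdeg l)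
    · rw [eval_finsetSum, Finset.sum_eq_single k]
      · simp [hGself, hu, hP' k]
      · intro l _ hl; simp [hGne k l hl.symm]
      · simp
  have hT : Ξ * derivative (derivative f) - 2 * (X * Ξ + derivative Ξ) * derivative f + V * f
      = ∑ l, C (u l) * (Ξ * derivative (derivative (G l))
        - 2 * (X * Ξ + derivative Ξ) * derivative (G l) + V * G l) := by
    conv_lhs => rw [hexp]
    simp only [derivative_sum, derivative_C_mul, Finset.mul_sum]
    rw [← Finset.sum_sub_distrib, ← Finset.sum_add_distrib]
    exact Finset.sum_congr rfl fun l _ => by ring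
  rw [hT] at hode
  have hk := congrArg (eval (η k)) hode
  rw [eval_add, eval_finsetSum, ← Finset.add_sum_erase _ _ (Finset.mem_univ k)] at hk
  have hs : ∑ l ∈ Finset.univ.erase k, (C (u l) * (Ξ * derivative (derivative (G l))
        - 2 * (X * Ξ + derivative Ξ) * derivative (G l) + V * G l)).eval (η k) =
      -(∑ l ∈ Finset.univ.erase k, 2 / (η k - η l) ^ 2 * u l) *
        (Ξ.eval (η k) * (derivative P).eval (η k)) := by
    rw [neg_mul, Finset.sum_mul, ← Finset.sum_neg_distrib]
    refine Finset.sum_congr rfl fun l hl => ?_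
    rw [eval_mul, eval_C, hTG k l (Finset.ne_of_mem_erase hl).symm]
    ring
  rw [hs, eval_mul (p := C (u k)), eval_C, eval_mul, eval_C, eval_mul, eval_zero] at hk
  have hfu : f.eval (η k) = u k * (derivative P).eval (η k) := by
    simp [hu, hP' k]
  rw [hfu] at hk
  have h1 := hP' k
  have h2 := hΞ k
  rw [← sub_eq_zero]
  apply mul_right_cancel₀ (mul_ne_zero h2 h1)
  rw [zero_mul]
  set S := ∑ l ∈ Finset.univ.erase k, 2 / (η k - η l) ^ 2 * u l
  change (c * u k - (_ * u k + S)) * _ = 0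
  rw [← hk]
  field_simp
  ring

/-- Eigenvectors of a symmetric matrix (diagonal `τ`, off-diagonal entries `s`) for distinct
eigenvalues are orthogonal for the bilinear form, without complex conjugation. -/
theorem sum_mul_eq_zero_of_symm {ι : Type*} [Fintype ι] [DecidableEq ι] {τ : ι → ℂ}
    {s : ι → ι → ℂ} (hs : ∀ k l, s k l = s l k) {u w : ι → ℂ} {a b : ℂ} (hab : a ≠ b)
    (hu : ∀ k, a * u k = τ k * u k + ∑ l ∈ Finset.univ.erase k, s k l * u l)
    (hw : ∀ k, b * w k = τ k * w k + ∑ l ∈ Finset.univ.erase k, s k l * w l) :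
    ∑ k, u k * w k = 0 := by
  have h1 : ∑ k, (∑ l ∈ Finset.univ.erase k, s k l * u l) * w k =
      ∑ k, (∑ l ∈ Finset.univ.erase k, s k l * w l) * u k := by
    simp_rw [Finset.sum_mul]
    rw [Finset.sum_comm' (t' := Finset.univ) (s' := fun l => Finset.univ.erase l)
      (by intro x y; simp [eq_comm])]
    refine Finset.sum_congr rfl fun k _ => Finset.sum_congr rfl fun l _ => ?_
    rw [hs l k]; ring
  have h2 : (a - b) * ∑ k, u k * w k = 0 := by
    have : (a - b) * ∑ k, u k * w k =
        ∑ k, (∑ l ∈ Finset.univ.erase k, s k l * u l) * w k -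
          ∑ k, (∑ l ∈ Finset.univ.erase k, s k l * w l) * u k := by
      rw [Finset.mul_sum, ← Finset.sum_sub_distrib]
      refine Finset.sum_congr rfl fun k _ => ?_
      linear_combination w k * hu k - u k * hw k
    rw [this, h1, sub_self]
  exact (mul_eq_zero.1 h2).resolve_left (sub_ne_zero.2 hab)

/-- `KA_bilinear` over `ℂ`, arranged as in `stieltjes_relation`. -/
theorem KA_ode_map {M : ℕ} (d : Fin M → ℕ) (n : ℕ) :
    (XiHermite d).map (algebraMap ℝ ℂ) *
        derivative (derivative ((KAHermite d n).map (algebraMap ℝ ℂ)))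
      - 2 * (X * (XiHermite d).map (algebraMap ℝ ℂ)
          + derivative ((XiHermite d).map (algebraMap ℝ ℂ))) *
        derivative ((KAHermite d n).map (algebraMap ℝ ℂ))
      + (derivative (derivative (XiHermite d)) + 2 * X * derivative (XiHermite d)).map
          (algebraMap ℝ ℂ) * (KAHermite d n).map (algebraMap ℝ ℂ)
      + C (2 * ((n : ℂ) - M)) * ((XiHermite d).map (algebraMap ℝ ℂ) *
          (KAHermite d n).map (algebraMap ℝ ℂ)) = 0 := by
  have h := congrArg (Polynomial.map (algebraMap ℝ ℂ)) (KA_bilinear d n)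
  simp only [Polynomial.map_add, Polynomial.map_sub, Polynomial.map_mul, map_X, Polynomial.map_ofNat,
    ← derivative_map, map_mul, map_sub, map_natCast, map_ofNat, Polynomial.map_natCast, Polynomial.map_zero] at h ⊢
  linear_combination h

/-- **Discrete orthogonality relations for the Krein–Adler Hermite polynomials**: the sum
of `P_{D,n}·P_{D,m}` over the `Ñ` zeros of `P_{D,N}`, weighted by `1/(P_{D,N}′)²`,
vanishes for distinct `n, m ∈ {0,…,N−1} \ D`. -/
theorem discrete_orthogonality_KA_hermite
    (M N : ℕ) (d : Fin M → ℕ) (hpos : ∀ j, 0 < d j) (hmono : StrictMono d)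
    (hN : ∀ j, N ≠ d j)
    (Nt : ℕ) (hNt : Nt + M * (M + 1) / 2 = (∑ j, d j) + N)
    (hdeg : (KAHermite d N).natDegree = Nt)
    (η : Fin Nt → ℂ) (hη : Function.Injective η)
    (hzero : ∀ l, Polynomial.aeval (η l) (KAHermite d N) = 0)
    (hXi : ∀ l, Polynomial.aeval (η l) (XiHermite d) ≠ 0)
    (n m : ℕ) (hnm : n ≠ m) (hn : n < N) (hm : m < N)
    (hnD : ∀ j, n ≠ d j) (hmD : ∀ j, m ≠ d j) :
    ∑ l, Polynomial.aeval (η l) (KAHermite d n) * Polynomial.aeval (η l) (KAHermite d m) /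
        (Polynomial.aeval (η l) (Polynomial.derivative (KAHermite d N))) ^ 2 = 0 := by
  simp only [← eval_map_algebraMap, ← derivative_map] at hzero hXi ⊢
  obtain ⟨τ, hτ⟩ := stieltjes_relation hη
    (by rw [natDegree_map, hdeg]) hzero hXi (KA_ode_map d N)
  have hu := hτ _ _ (by rw [degree_map]; exact degree_KAHermite_lt d hNt hn) (KA_ode_map d n)
  have hw := hτ _ _ (by rw [degree_map]; exact degree_KAHermite_lt d hNt hm) (KA_ode_map d m)
  have hab : 2 * ((n : ℂ) - M) ≠ 2 * ((m : ℂ) - M) := by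
    simpa using hnm
  rw [← sum_mul_eq_zero_of_symm (s := fun k l => 2 / (η k - η l) ^ 2)
    (fun k l => by rw [← neg_sub (η l) (η k), neg_sq]) hab hu hw]
  refine Finset.sum_congr rfl fun l _ => ?_
  rw [div_mul_div_comm, sq]
end
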